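/- For integer n ≥ 0, Σ_{m=1}^∞ m^n/binom(2m,m) − (1/3)·Σ_{m=0}^∞ (m+1/2)^n/binom(2m+1,m+1/2) = (1/3)·Σ_{k=0}^n B_{n−k}^{(−k)}, where binom(2m+1,m+1/2) = Γ(2m+2)/Γ(m+3/2)² and B_n^{(−k)} are poly-Bernoulli numbers with negative index. (This is Theorem 1.2 specialized to σ = π/3, where 2·sin(π/6) = 1.) -/

import Mathlib

/-- The polylogarithm `Li_{-k}(z)` of nonpositive integer order, as a rational function:
`Li_0(z) = z/(1-z)` and `Li_{-(k+1)}(z) = z · d/dz Li_{-k}(z)`. -/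
noncomputable def negPolylog : ℕ → ℝ → ℝ
  | 0, z => z / (1 - z)
  | (k + 1), z => z * deriv (negPolylog k) z

/-- The poly-Bernoulli number `B_n^{(-k)}` with nonpositive index `-k`, defined as the `n`-th
Taylor coefficient (times `n!`) of `x ↦ Li_{-k}(1-e^{-x})/(1-e^{-x})` at `x = 0`
(with the removable singularity at `0` filled in by its limit value `1`). -/
noncomputable def polyBernoulli (n k : ℕ) : ℝ :=
  iteratedDeriv n
    (fun x : ℝ => if x = 0 then 1 else
      negPolylog k (1 - Real.exp (-x)) / (1 - Real.exp (-x))) 0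

/-- The half-integer binomial coefficient `binom(2m+1, m+1/2) = Γ(2m+2)/Γ(m+3/2)²`. -/
noncomputable def halfBinom (m : ℕ) : ℝ :=
  Real.Gamma (2 * m + 2) / (Real.Gamma ((m : ℝ) + 3 / 2)) ^ 2



/-!
Both series are sums of `x ^ n / binom(2x, x)`, with `binom(2x, x) = Γ(2x+1)/Γ(x+1)²`, over the
shifted progressions `1 + ℕ` and `1/2 + ℕ`. The recurrence
`(x + 1) binom(2x+2, x+1) = (4x + 2) binom(2x, x)` makes the summand of
`T p = (4X - 2) p(X) - (X + 1) p(X + 1)` telescope, so the functional `M` that sends a polynomial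
`p` to three times its sum over `1 + ℕ` minus its sum over `1/2 + ℕ` satisfies `M (T p) = 3 p(1)`.
Integrating the derivative of `sin ^ N * cos ^ 3` from `0` to `π/6` telescopes the sums for `p = 1`
and gives `M 1 = 1`.

Put `Q j = binom(X - 1, j)`. The two properties of `M` force
`M (Q j ^ 2) = M (Q j * Q (j + 1)) = 1`. In the expansion of `X ^ n` in these products, obtained by
telescoping `(1 - x t) ∑ x ^ n t ^ n = 1` through the generating functions
`D j = ∑ n, j! S(n+1, j+1) t ^ n`, only `∑ j, [t ^ n] (D j) ^ 2` survives the application of `M`.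
By the Arakawa–Kaneko formula `B_n^{(-k)} = ∑ j, (j!)² S(k+1, j+1) S(n+1, j+1)` this is the sum of
poly-Bernoulli numbers on the right-hand side.
-/

open scoped Nat

/-- The weight `j! S(n+1, j+1)`, with `S` the Stirling numbers of the second kind. These are both
the coefficients of `Li_{-n}(z)` in powers of `z/(1-z)` and the Taylor coefficients of
`e^x (e^x - 1)^j`. -/
def stirlingWeight (n j : ℕ) : ℕ :=
  j ! * Nat.stirlingSecond (n + 1) (j + 1)

theorem stirlingWeight_zero_right (n : ℕ) : stirlingWeight n 0 = 1 := by
  simp [stirlingWeight, Nat.stirlingSecond_one_right]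

theorem stirlingWeight_eq_zero_of_lt {n j : ℕ} (h : n < j) : stirlingWeight n j = 0 := by
  rw [stirlingWeight, Nat.stirlingSecond_eq_zero_of_lt (Nat.succ_lt_succ h), mul_zero]

theorem stirlingWeight_succ_succ (n j : ℕ) :
    stirlingWeight (n + 1) (j + 1) =
      (j + 2) * stirlingWeight n (j + 1) + (j + 1) * stirlingWeight n j := by
  simp only [stirlingWeight, Nat.stirlingSecond_succ_succ (n + 1), Nat.factorial_succ]
  ring

theorem sum_stirlingWeight_succ_mul {R : Type*} [CommSemiring R] (k : ℕ) (f : ℕ → R) :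
    ∑ j ∈ Finset.range (k + 2), stirlingWeight (k + 1) j * f j =
      ∑ j ∈ Finset.range (k + 1), stirlingWeight k j * ((j + 1) * (f j + f (j + 1))) := by
  have hshift : ∑ j ∈ Finset.range (k + 1), stirlingWeight k j * ((j + 1) * f j) =
      ∑ j ∈ Finset.range (k + 1), stirlingWeight k (j + 1) * ((j + 2) * f (j + 1)) + f 0 := by
    have hlast := Finset.sum_range_succ (fun j ↦ (stirlingWeight k j : R) * ((j + 1) * f j)) (k + 1)
    rw [stirlingWeight_eq_zero_of_lt k.lt_succ_self, Finset.sum_range_succ'] at hlast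
    simpa [stirlingWeight_zero_right, add_assoc, one_add_one_eq_two] using hlast.symm
  simp only [mul_add, Finset.sum_add_distrib] at hshift ⊢
  rw [hshift, Finset.sum_range_succ', add_right_comm, ← Finset.sum_add_distrib,
    stirlingWeight_zero_right, Nat.cast_one, one_mul]
  congr 1
  refine Finset.sum_congr rfl fun j _ ↦ ?_
  rw [stirlingWeight_succ_succ]
  push_cast
  ring

theorem negPolylog_eq_sum (k : ℕ) {z : ℝ} (hz : z ≠ 1) :
    negPolylog k z = ∑ j ∈ Finset.range (k + 1), stirlingWeight k j * (z / (1 - z)) ^ (j + 1) := by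
  induction k generalizing z with
  | zero => simp [negPolylog, stirlingWeight_zero_right]
  | succ k ih =>
    have hz' : 1 - z ≠ 0 := sub_ne_zero.2 hz.symm
    have heq : negPolylog k =ᶠ[nhds z] fun y ↦
        ∑ j ∈ Finset.range (k + 1), stirlingWeight k j * (y / (1 - y)) ^ (j + 1) := by
      filter_upwards [isOpen_ne.mem_nhds hz] with y hy using ih hy
    have hdiv : HasDerivAt (fun y : ℝ ↦ y / (1 - y)) (1 / (1 - z) ^ 2) z :=
      ((hasDerivAt_id z).div ((hasDerivAt_id z).const_sub 1) hz').congr_deriv (by simp)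
    have hsum := HasDerivAt.fun_sum (u := Finset.range (k + 1)) fun j _ ↦
      (hdiv.fun_pow (j + 1)).const_mul (stirlingWeight k j : ℝ)
    have hmul : z * (1 / (1 - z) ^ 2) = z / (1 - z) + (z / (1 - z)) ^ 2 := by
      field_simp
      ring
    rw [negPolylog, heq.deriv_eq, hsum.deriv, sum_stirlingWeight_succ_mul, Finset.mul_sum]
    refine Finset.sum_congr rfl fun j _ ↦ ?_
    push_cast
    linear_combination stirlingWeight k j * (j + 1) * (z / (1 - z)) ^ j * hmul

theorem iteratedDeriv_exp_mul_exp_sub_one_pow_zero (n j : ℕ) :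
    iteratedDeriv n (fun x ↦ Real.exp x * (Real.exp x - 1) ^ j) 0 = stirlingWeight n j := by
  induction n generalizing j with
  | zero =>
    cases j
    · simp [stirlingWeight_zero_right]
    · simp [stirlingWeight_eq_zero_of_lt]
  | succ n ih =>
    rw [iteratedDeriv_succ']
    cases j with
    | zero => simpa [stirlingWeight_zero_right] using ih 0
    | succ j =>
      have hderiv : deriv (fun x ↦ Real.exp x * (Real.exp x - 1) ^ (j + 1)) = fun x ↦
          (j + 2 : ℝ) * (Real.exp x * (Real.exp x - 1) ^ (j + 1)) +
            (j + 1 : ℝ) * (Real.exp x * (Real.exp x - 1) ^ j) := by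
        funext x
        refine ((Real.hasDerivAt_exp x).mul
          (((Real.hasDerivAt_exp x).sub_const 1).pow (j + 1))).deriv.trans ?_
        simp only [Pi.pow_apply]
        push_cast
        ring
      rw [hderiv, iteratedDeriv_fun_add (by fun_prop) (by fun_prop), iteratedDeriv_const_mul_field,
        iteratedDeriv_const_mul_field, ih, ih, stirlingWeight_succ_succ]
      push_cast
      ring

theorem polyBernoulli_eq_sum (n k : ℕ) :
    polyBernoulli n k =
      ∑ j ∈ Finset.range (k + 1), (stirlingWeight k j * stirlingWeight n j : ℝ) := by
  have hfun : (fun x : ℝ ↦ if x = 0 then 1 else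
      negPolylog k (1 - Real.exp (-x)) / (1 - Real.exp (-x))) = fun x ↦
        ∑ j ∈ Finset.range (k + 1), stirlingWeight k j * (Real.exp x * (Real.exp x - 1) ^ j) := by
    funext x
    split_ifs with hx
    · simp [hx, Finset.sum_range_succ', stirlingWeight_zero_right]
    · have hne : 1 - Real.exp (-x) ≠ 0 := by
        rwa [ne_eq, sub_eq_zero, eq_comm, Real.exp_eq_one_iff, neg_eq_zero]
      have hmul : Real.exp x * (1 - Real.exp (-x)) = Real.exp x - 1 := by
        rw [mul_sub, ← Real.exp_add, add_neg_cancel, Real.exp_zero, mul_one]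
      have hdiv : (1 - Real.exp (-x)) / (1 - (1 - Real.exp (-x))) = Real.exp x - 1 := by
        rw [sub_sub_cancel, Real.exp_neg, div_inv_eq_mul, ← Real.exp_neg, mul_comm, hmul]
      rw [negPolylog_eq_sum k (by simp [Real.exp_ne_zero]), Finset.sum_div, hdiv]
      refine Finset.sum_congr rfl fun j _ ↦ ?_
      rw [div_eq_iff hne]
      linear_combination -(stirlingWeight k j : ℝ) * (Real.exp x - 1) ^ j * hmul
  rw [polyBernoulli, hfun, iteratedDeriv_fun_sum fun j _ ↦ by fun_prop]
  simp_rw [iteratedDeriv_const_mul_field, iteratedDeriv_exp_mul_exp_sub_one_pow_zero]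

section StirlingSeries

open PowerSeries

/-- The ordinary generating function `∑ n, j! S(n+1, j+1) Xⁿ` of the `j`-th column of
`stirlingWeight`. -/
noncomputable def stirlingSeries (R : Type*) [Semiring R] (j : ℕ) : R⟦X⟧ :=
  mk fun n ↦ (stirlingWeight n j : R)

theorem map_stirlingSeries {R S : Type*} [Semiring R] [Semiring S] (f : R →+* S) (j : ℕ) :
    map f (stirlingSeries R j) = stirlingSeries S j := by
  ext n
  simp [stirlingSeries]

theorem X_pow_dvd_stirlingSeries (R : Type*) [Semiring R] (j : ℕ) :
    X ^ j ∣ stirlingSeries R j :=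
  X_pow_dvd_iff.2 fun n h ↦ by simp [stirlingSeries, stirlingWeight_eq_zero_of_lt h]

theorem one_sub_X_mul_stirlingSeries_zero (R : Type*) [Ring R] :
    (1 - X) * stirlingSeries R 0 = 1 := by
  ext n
  rw [sub_mul, one_mul, map_sub]
  cases n <;> simp [stirlingSeries, stirlingWeight_zero_right, coeff_succ_X_mul, coeff_one]

theorem one_sub_mul_stirlingSeries_succ (R : Type*) [CommRing R] (j : ℕ) :
    (1 - ((j : R⟦X⟧) + 2) * X) * stirlingSeries R (j + 1) =
      ((j : R⟦X⟧) + 1) * X * stirlingSeries R j := by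
  have htwo : (j : R⟦X⟧) + 2 = C (j + 2 : R) := by simp [map_ofNat]
  have hone : (j : R⟦X⟧) + 1 = C (j + 1 : R) := by simp
  ext n
  rw [htwo, hone, sub_mul, one_mul, map_sub, mul_assoc, mul_assoc, coeff_C_mul, coeff_C_mul]
  cases n with
  | zero => simp [stirlingSeries, stirlingWeight_eq_zero_of_lt]
  | succ n => simp [stirlingSeries, coeff_succ_X_mul, stirlingWeight_succ_succ]

theorem sum_polyBernoulli_eq_sum_coeff_sq (n : ℕ) :
    ∑ k ∈ Finset.range (n + 1), polyBernoulli (n - k) k =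
      ∑ j ∈ Finset.range (n + 1), coeff n (stirlingSeries ℝ j ^ 2) := by
  simp only [sq, coeff_mul, Finset.Nat.sum_antidiagonal_eq_sum_range_succ_mk, stirlingSeries,
    coeff_mk]
  rw [Finset.sum_comm]
  refine Finset.sum_congr rfl fun k hk ↦ ?_
  rw [polyBernoulli_eq_sum]
  refine Finset.sum_subset (Finset.range_subset_range.2 (Finset.mem_range.1 hk)) fun j _ hj ↦ ?_
  rw [stirlingWeight_eq_zero_of_lt (by simpa using hj), Nat.cast_zero, zero_mul]

end StirlingSeries

section BinomialExpansion

open PowerSeries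

variable {A : Type*} [CommRing A] [BinomialRing A]

theorem succ_mul_choose_succ (x : A) (j : ℕ) :
    (j + 1) * Ring.choose x (j + 1) = (x - j) * Ring.choose x j := by
  simpa [mul_comm] using Ring.choose_smul_choose x j.le_succ

theorem mul_choose_sub_one (x : A) (j : ℕ) :
    x * Ring.choose (x - 1) j =
      (j + 1) * (Ring.choose (x - 1) j + Ring.choose (x - 1) (j + 1)) := by
  linear_combination -succ_mul_choose_succ (x - 1) j

theorem one_sub_mul_sum_sq_stirlingSeries_mul_choose (x : A) (N : ℕ) :
    (1 - C x * X) * ∑ j ∈ Finset.range N, (1 + C (x - 2 * (j + 1)) * X) *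
        (stirlingSeries A j * C (Ring.choose (x - 1) j)) ^ 2 =
      1 - ((1 - ((N : A⟦X⟧) + 1) * X) * (stirlingSeries A N * C (Ring.choose (x - 1) N))) ^ 2 := by
  induction N with
  | zero => simp [one_sub_X_mul_stirlingSeries_zero]
  | succ N ih =>
    have hstep : (1 - ((N : A⟦X⟧) + 2) * X) *
        (stirlingSeries A (N + 1) * C (Ring.choose (x - 1) (N + 1))) =
        X * C (x - (N + 1)) * (stirlingSeries A N * C (Ring.choose (x - 1) N)) := by
      have hq := congrArg (C (R := A)) (succ_mul_choose_succ (x - 1) N)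
      simp only [map_mul, map_add, map_sub, map_natCast, map_one] at hq ⊢
      linear_combination C (Ring.choose (x - 1) (N + 1)) * one_sub_mul_stirlingSeries_succ A N +
        X * stirlingSeries A N * hq
    rw [Finset.sum_range_succ, mul_add, ih, Nat.cast_add_one, add_assoc, one_add_one_eq_two, hstep]
    simp only [map_sub, map_add, map_mul, map_natCast, map_one, map_ofNat]
    ring

theorem coeff_sum_sq_stirlingSeries_mul_choose (x : A) {n N : ℕ} (h : n < N) :
    coeff n (∑ j ∈ Finset.range N, (1 + C (x - 2 * (j + 1)) * X) *
      (stirlingSeries A j * C (Ring.choose (x - 1) j)) ^ 2) = x ^ n := by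
  have hgeom : mk (x ^ ·) * (1 - C x * X) = 1 := by
    simpa [rescale_mk] using congrArg (rescale x) (mk_one_mul_one_sub_eq_one A)
  have hdvd : X ^ N ∣ mk (x ^ ·) *
      ((1 - ((N : A⟦X⟧) + 1) * X) * (stirlingSeries A N * C (Ring.choose (x - 1) N))) ^ 2 :=
    (((X_pow_dvd_stirlingSeries A N).mul_right _).mul_left _).pow two_ne_zero |>.mul_left _
  set S := ∑ j ∈ Finset.range N, (1 + C (x - 2 * (j + 1)) * X) *
    (stirlingSeries A j * C (Ring.choose (x - 1) j)) ^ 2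
  have hsum : S = mk (x ^ ·) - mk (x ^ ·) *
      ((1 - ((N : A⟦X⟧) + 1) * X) * (stirlingSeries A N * C (Ring.choose (x - 1) N))) ^ 2 := by
    linear_combination
      mk (x ^ ·) * one_sub_mul_sum_sq_stirlingSeries_mul_choose x N - S * hgeom
  rw [hsum, map_sub, X_pow_dvd_iff.1 hdvd n h, sub_zero, coeff_mk]

theorem pow_eq_sum_stirlingSeries_choose (x : A) (n : ℕ) :
    x ^ n = ∑ j ∈ Finset.range (n + 1),
      (coeff n (stirlingSeries A j ^ 2) * Ring.choose (x - 1) j ^ 2 +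
        coeff n (X * stirlingSeries A j ^ 2) * ((j + 1) *
          (Ring.choose (x - 1) j * Ring.choose (x - 1) (j + 1) - Ring.choose (x - 1) j ^ 2))) := by
  rw [← coeff_sum_sq_stirlingSeries_mul_choose x n.lt_succ_self, map_sum]
  refine Finset.sum_congr rfl fun j _ ↦ ?_
  rw [← coeff_mul_C, ← coeff_mul_C, ← map_add]
  congr 1
  have hx := congrArg (C (R := A)) (mul_choose_sub_one x j)
  simp only [map_sub, map_add, map_mul, map_natCast, map_one, map_ofNat, map_pow] at hx ⊢
  linear_combination X * stirlingSeries A j ^ 2 * C (Ring.choose (x - 1) j) * hx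

end BinomialExpansion

section CentralBinomDiff

open Polynomial

/-- The summation operator `p ↦ (4X - 2) p(X) - (X + 1) p(X + 1)`. If `b` satisfies
`(x + 1) b(x + 1) = (4 x + 2) b(x)`, as does `x ↦ binom(2x, x)`, then the value of this polynomial
at `x`, divided by `b(x)`, is `g(x) - g(x + 1)` with `g(x) = (4x - 2) p(x) / b(x)`. -/
noncomputable def centralBinomDiff {R : Type*} [CommRing R] (p : R[X]) : R[X] :=
  (4 * X - 2) * p - (X + 1) * p.comp (X + 1)

variable {K : Type*} [Field K] [CharZero K]

theorem choose_X_sub_one_succ_comp (j : ℕ) :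
    (Ring.choose (X - 1 : K[X]) (j + 1)).comp (X + 1) =
      Ring.choose (X - 1) j + Ring.choose (X - 1) (j + 1) := by
  have hX : compRingHom (X + 1) (X - 1 : K[X]) = X - 1 + 1 := by simp
  rw [← coe_compRingHom_apply, Ring.map_choose, hX, Ring.choose_succ_succ]

theorem eval_one_choose_X_sub_one_succ (j : ℕ) :
    (Ring.choose (X - 1 : K[X]) (j + 1)).eval 1 = 0 := by
  have hX : evalRingHom 1 (X - 1 : K[X]) = 0 := by simp
  rw [← coe_evalRingHom, Ring.map_choose, hX, Ring.choose_zero_succ]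

theorem centralBinomDiff_choose_sq (j : ℕ) :
    centralBinomDiff (Ring.choose (X - 1 : K[X]) (j + 1) ^ 2) =
      (3 * (j + 2) : K) • (Ring.choose (X - 1) (j + 1) * Ring.choose (X - 1) (j + 2)) +
        (j + 1 : K) • Ring.choose (X - 1) (j + 1) ^ 2 -
        (3 * j + 5 : K) • (Ring.choose (X - 1) j * Ring.choose (X - 1) (j + 1)) -
        (j + 2 : K) • Ring.choose (X - 1) j ^ 2 := by
  have h₀ := mul_choose_sub_one (X : K[X]) j
  have h₁ := mul_choose_sub_one (X : K[X]) (j + 1)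
  simp only [centralBinomDiff, pow_comp, choose_X_sub_one_succ_comp, smul_eq_C_mul, map_add,
    map_mul, map_natCast, map_ofNat, map_one]
  push_cast at h₁
  linear_combination 3 * Ring.choose (X - 1) (j + 1) * h₁ -
    (2 * Ring.choose (X - 1) (j + 1) + Ring.choose (X - 1) j) * h₀

theorem centralBinomDiff_choose_mul_choose_succ (j : ℕ) :
    centralBinomDiff (Ring.choose (X - 1 : K[X]) (j + 1) * Ring.choose (X - 1) (j + 2)) =
      (3 * (j + 2) : K) • Ring.choose (X - 1) (j + 2) ^ 2 +
        (j : K) • (Ring.choose (X - 1) (j + 1) * Ring.choose (X - 1) (j + 2)) -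
        (3 * j + 5 : K) • Ring.choose (X - 1) (j + 1) ^ 2 -
        (j + 1 : K) • (Ring.choose (X - 1) j * Ring.choose (X - 1) (j + 1)) := by
  have h₀ := mul_choose_sub_one (X : K[X]) j
  have h₁ := mul_choose_sub_one (X : K[X]) (j + 1)
  simp only [centralBinomDiff, mul_comp, choose_X_sub_one_succ_comp, smul_eq_C_mul, map_add,
    map_mul, map_natCast, map_ofNat, map_one]
  push_cast at h₁
  linear_combination (3 * Ring.choose (X - 1) (j + 2) - Ring.choose (X - 1) (j + 1) +
    Ring.choose (X - 1) j) * h₁ -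
    (Ring.choose (X - 1) (j + 2) + 2 * Ring.choose (X - 1) (j + 1)) * h₀

theorem centralBinomDiff_one :
    centralBinomDiff (1 : K[X]) = (3 : K) • (Ring.choose (X - 1) 0 * Ring.choose (X - 1) 1) := by
  simp only [centralBinomDiff, one_comp, Ring.choose_zero_right, Ring.choose_one_right,
    smul_eq_C_mul, map_ofNat]
  ring

theorem centralBinomDiff_X_sub_one :
    centralBinomDiff (X - 1 : K[X]) =
      (3 : K) • Ring.choose (X - 1) 1 ^ 2 - Ring.choose (X - 1) 0 * Ring.choose (X - 1) 1 -
        (2 : K) • 1 := by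
  simp only [centralBinomDiff, sub_comp, X_comp, one_comp, Ring.choose_zero_right,
    Ring.choose_one_right, smul_eq_C_mul, map_ofNat]
  ring

variable {M : K[X] →ₗ[K] K}

theorem map_choose_products_eq_one (h1 : M 1 = 1)
    (hM : ∀ p, M (centralBinomDiff p) = 3 * p.eval 1) (j : ℕ) :
    M (Ring.choose (X - 1) j ^ 2) = 1 ∧
      M (Ring.choose (X - 1) j * Ring.choose (X - 1) (j + 1)) = 1 ∧
      M (Ring.choose (X - 1) (j + 1) ^ 2) = 1 := by
  induction j with
  | zero =>
    have hmul : M (Ring.choose (X - 1) 0 * Ring.choose (X - 1) 1) = 1 := by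
      have h := hM 1
      rw [centralBinomDiff_one, map_smul, smul_eq_mul, eval_one] at h
      exact mul_left_cancel₀ three_ne_zero h
    refine ⟨by simp [h1], hmul, ?_⟩
    have h := hM (X - 1)
    simp only [centralBinomDiff_X_sub_one, map_sub, map_smul, hmul, h1, smul_eq_mul, eval_sub,
      eval_X, eval_one] at h
    exact mul_left_cancel₀ three_ne_zero (by linear_combination h)
  | succ j ih =>
    obtain ⟨hsq, hmul, hsq'⟩ := ih
    have hj : 3 * (j + 2 : K) ≠ 0 := by exact_mod_cast (by positivity : 3 * (j + 2) ≠ 0)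
    have hmul' : M (Ring.choose (X - 1) (j + 1) * Ring.choose (X - 1) (j + 2)) = 1 := by
      have h := hM (Ring.choose (X - 1) (j + 1) ^ 2)
      simp only [centralBinomDiff_choose_sq, map_add, map_sub, map_smul, smul_eq_mul, eval_pow,
        eval_one_choose_X_sub_one_succ, hsq, hmul, hsq'] at h
      exact mul_left_cancel₀ hj (by linear_combination h)
    refine ⟨hsq', hmul', ?_⟩
    have h := hM (Ring.choose (X - 1) (j + 1) * Ring.choose (X - 1) (j + 2))
    simp only [centralBinomDiff_choose_mul_choose_succ, map_add, map_sub, map_smul, smul_eq_mul,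
      eval_mul, eval_one_choose_X_sub_one_succ, hmul, hsq', hmul'] at h
    exact mul_left_cancel₀ hj (by linear_combination h)

theorem map_X_pow_eq_sum_coeff_sq (h1 : M 1 = 1)
    (hM : ∀ p, M (centralBinomDiff p) = 3 * p.eval 1) (n : ℕ) :
    M (X ^ n) =
      ∑ j ∈ Finset.range (n + 1), PowerSeries.coeff n (stirlingSeries K j ^ 2) := by
  rw [pow_eq_sum_stirlingSeries_choose, map_sum]
  refine Finset.sum_congr rfl fun j _ ↦ ?_
  obtain ⟨hsq, hmul, -⟩ := map_choose_products_eq_one h1 hM j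
  have hj : (j + 1 : K[X]) = C (j + 1 : K) := by simp
  rw [← map_stirlingSeries (C : K →+* K[X]), ← PowerSeries.map_X (C : K →+* K[X]), ← map_pow,
    ← map_mul, hj, PowerSeries.coeff_map, PowerSeries.coeff_map]
  simp only [← smul_eq_C_mul]
  simp [hsq, hmul]

end CentralBinomDiff

section RealCentralBinom

open Real Filter Topology

/-- The central binomial coefficient `binom(2x, x) = Γ(2x+1)/Γ(x+1)²` at a real argument. -/
noncomputable def realCentralBinom (x : ℝ) : ℝ :=
  Gamma (2 * x + 1) / Gamma (x + 1) ^ 2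

theorem realCentralBinom_pos {x : ℝ} (hx : -1 / 2 < x) : 0 < realCentralBinom x :=
  div_pos (Gamma_pos_of_pos (by linarith)) (pow_pos (Gamma_pos_of_pos (by linarith)) 2)

theorem succ_mul_realCentralBinom_succ {x : ℝ} (hx : -1 / 2 < x) :
    (x + 1) * realCentralBinom (x + 1) = (4 * x + 2) * realCentralBinom x := by
  have hx₁ : x + 1 ≠ 0 := by linarith
  have hΓ : Gamma (x + 1) ≠ 0 := (Gamma_pos_of_pos (by linarith)).ne'
  have hnum : Gamma (2 * (x + 1) + 1) = (2 * (x + 1)) * ((2 * x + 1) * Gamma (2 * x + 1)) := by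
    rw [Gamma_add_one (by simpa using hx₁), ← Gamma_add_one (by linarith : 2 * x + 1 ≠ 0),
      mul_add_one, add_assoc (2 * x), one_add_one_eq_two]
  rw [realCentralBinom, realCentralBinom, hnum, Gamma_add_one hx₁]
  field_simp
  ring

theorem realCentralBinom_natCast (n : ℕ) : realCentralBinom n = (2 * n).choose n := by
  have h : realCentralBinom n = ((2 * n)! : ℝ) / (n ! * n !) := by
    rw [realCentralBinom, Gamma_nat_eq_factorial, sq]
    exact_mod_cast congrArg (· / ((n ! * n ! : ℕ) : ℝ)) (Gamma_nat_eq_factorial (2 * n))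
  rw [h, Nat.cast_choose ℝ (by lia : n ≤ 2 * n), two_mul, Nat.add_sub_cancel]

theorem realCentralBinom_one_half : realCentralBinom (1 / 2) = 4 / π := by
  have hΓ : Gamma (1 / 2 + 1) ^ 2 = π / 4 := by
    rw [Gamma_add_one one_half_pos.ne', Gamma_one_half_eq, mul_pow, sq_sqrt pi_pos.le]
    ring
  rw [realCentralBinom, hΓ, mul_one_div_cancel two_ne_zero, one_add_one_eq_two, Gamma_two,
    one_div_div]

theorem halfBinom_eq_realCentralBinom (m : ℕ) : halfBinom m = realCentralBinom (m + 1 / 2) := by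
  rw [halfBinom, realCentralBinom]
  ring_nf

theorem tendsto_succ_div_pow_mul_atTop (n : ℕ) :
    Tendsto (fun x : ℝ ↦ ((x + 1) / x) ^ n * ((x + 1) / (4 * x + 2))) atTop (𝓝 (1 / 4)) := by
  have h : Tendsto (fun x : ℝ ↦ (1 + x⁻¹) ^ n * ((1 + x⁻¹) / (4 + 2 * x⁻¹))) atTop
      (𝓝 ((1 + 0) ^ n * ((1 + 0) / (4 + 2 * 0)))) := by
    have hinv := tendsto_inv_atTop_zero (𝕜 := ℝ)
    exact ((hinv.const_add 1).pow n).mul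
      ((hinv.const_add 1).div ((hinv.const_mul 2).const_add 4) (by norm_num))
  rw [add_zero, one_pow, mul_zero, add_zero, one_mul] at h
  refine h.congr' ?_
  filter_upwards [eventually_gt_atTop 0] with x hx
  have hsucc : 1 + x⁻¹ = (x + 1) / x := by field_simp
  have hdiv : (1 + x⁻¹) / (4 + 2 * x⁻¹) = (x + 1) / (4 * x + 2) := by field_simp
  rw [hdiv, hsucc]

theorem summable_pow_div_realCentralBinom (θ : ℝ) (n : ℕ) :
    Summable fun m : ℕ ↦ (m + θ) ^ n / realCentralBinom (m + θ) := by
  have hatTop : Tendsto (fun m : ℕ ↦ (m : ℝ) + θ) atTop atTop :=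
    tendsto_atTop_add_const_right _ _ tendsto_natCast_atTop_atTop
  have hpos : ∀ᶠ m : ℕ in atTop, 0 < (m : ℝ) + θ := hatTop.eventually_gt_atTop 0
  refine summable_of_ratio_test_tendsto_lt_one (l := 1 / 4) (by norm_num) ?_
    (((tendsto_succ_div_pow_mul_atTop n).comp hatTop).congr' ?_)
  · filter_upwards [hpos] with m hm
    exact (div_pos (pow_pos hm n) (realCentralBinom_pos (by linarith))).ne'
  · filter_upwards [hpos] with m hm
    have hB := realCentralBinom_pos (by linarith : -1 / 2 < m + θ)
    have hB' := realCentralBinom_pos (by linarith : -1 / 2 < m + θ + 1)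
    have hrec := succ_mul_realCentralBinom_succ (by linarith : -1 / 2 < m + θ)
    rw [Nat.cast_add_one, add_right_comm, norm_of_nonneg (by positivity),
      norm_of_nonneg (by positivity), Function.comp_apply, div_pow]
    field_simp
    linear_combination hrec

open Polynomial

theorem summable_eval_div_realCentralBinom (θ : ℝ) (p : ℝ[X]) :
    Summable fun m : ℕ ↦ p.eval (m + θ) / realCentralBinom (m + θ) := by
  induction p using Polynomial.induction_on' with
  | add p q hp hq => simpa [add_div] using hp.add hq
  | monomial n a =>
    simpa [mul_div_assoc] using (summable_pow_div_realCentralBinom θ n).mul_left a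

/-- The linear functional `p ↦ ∑ p(x) / binom(2x, x)`, summed over `x ∈ θ + ℕ`. -/
noncomputable def centralBinomFunctional (θ : ℝ) : ℝ[X] →ₗ[ℝ] ℝ where
  toFun p := ∑' m : ℕ, p.eval (m + θ) / realCentralBinom (m + θ)
  map_add' p q := by
    rw [← (summable_eval_div_realCentralBinom θ p).tsum_add
      (summable_eval_div_realCentralBinom θ q)]
    simp [add_div]
  map_smul' a p := by simp [mul_div_assoc, tsum_mul_left]

theorem centralBinomFunctional_apply (θ : ℝ) (p : ℝ[X]) :
    centralBinomFunctional θ p = ∑' m : ℕ, p.eval (m + θ) / realCentralBinom (m + θ) :=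
  rfl

theorem centralBinomFunctional_centralBinomDiff {θ : ℝ} (hθ : -1 / 2 < θ) (p : ℝ[X]) :
    centralBinomFunctional θ (centralBinomDiff p) =
      (4 * θ - 2) * p.eval θ / realCentralBinom θ := by
  have hg := summable_eval_div_realCentralBinom θ ((4 * X - 2) * p)
  set g : ℕ → ℝ := fun m ↦ ((4 * X - 2) * p).eval (m + θ) / realCentralBinom (m + θ)
  have hdiff (m : ℕ) :
      (centralBinomDiff p).eval (m + θ) / realCentralBinom (m + θ) = g m - g (m + 1) := by
    have hm : -1 / 2 < m + θ := by linarith [m.cast_nonneg (α := ℝ)]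
    have hB := realCentralBinom_pos hm
    have hB' := realCentralBinom_pos (by linarith : -1 / 2 < m + θ + 1)
    have hrec := succ_mul_realCentralBinom_succ hm
    simp only [g, centralBinomDiff, eval_sub, eval_mul, eval_add, eval_comp, eval_X, eval_one,
      eval_ofNat, Nat.cast_add_one, add_right_comm _ 1 θ]
    field_simp
    linear_combination -p.eval (m + θ + 1) * hrec
  rw [centralBinomFunctional_apply, tsum_congr hdiff, hg.tsum_sub ((summable_nat_add_iff 1).2 hg),
    hg.tsum_eq_zero_add, add_sub_cancel_right]
  simp [g]

/-- A closed form of `cos³ x · ∑ (2 sin x)^(2y-1) / binom(2y, y)`, summed over `y ∈ (N+1)/2 + ℕ`: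
the tails of the series for `N = 0` and `N = 1`. The truncated exponent `N - 1` is harmless because
of the factor `N`. -/
noncomputable def centralBinomTail (N : ℕ) (x : ℝ) : ℝ :=
  2 ^ N / realCentralBinom ((N + 1) / 2) *
    (0 ^ N + N * ∫ y in 0..x, sin y ^ (N - 1) * cos y ^ 2)

theorem sin_pow_mul_cos_pow_three (N : ℕ) (x : ℝ) :
    sin x ^ N * cos x ^ 3 = 0 ^ N + N * (∫ y in 0..x, sin y ^ (N - 1) * cos y ^ 2) -
      (N + 3) * ∫ y in 0..x, sin y ^ (N + 1) * cos y ^ 2 := by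
  have hderiv (y : ℝ) : HasDerivAt (fun y ↦ sin y ^ N * cos y ^ 3)
      (N * (sin y ^ (N - 1) * cos y ^ 2) - (N + 3) * (sin y ^ (N + 1) * cos y ^ 2)) y := by
    refine (((hasDerivAt_sin y).fun_pow N).mul ((hasDerivAt_cos y).fun_pow 3)).congr_deriv ?_
    cases N with
    | zero => simp; ring
    | succ N =>
      push_cast
      linear_combination (N + 1) * sin y ^ N * cos y ^ 2 * sin_sq_add_cos_sq y
  have hFTC := intervalIntegral.integral_eq_sub_of_hasDerivAt (fun y _ ↦ hderiv y)
    (Continuous.intervalIntegrable (by fun_prop) 0 x)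
  rw [intervalIntegral.integral_sub, intervalIntegral.integral_const_mul,
    intervalIntegral.integral_const_mul, sin_zero, cos_zero] at hFTC
  · linear_combination -hFTC
  all_goals exact Continuous.intervalIntegrable (by fun_prop) ..

theorem centralBinomTail_sub_centralBinomTail_add_two (N : ℕ) (x : ℝ) :
    centralBinomTail N x - centralBinomTail (N + 2) x =
      (2 * sin x) ^ N / realCentralBinom ((N + 1) / 2) * cos x ^ 3 := by
  have hN : -1 / 2 < (N + 1 : ℝ) / 2 := by linarith [N.cast_nonneg (α := ℝ)]
  have hB := realCentralBinom_pos hN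
  have hB' := realCentralBinom_pos (by linarith : -1 / 2 < (N + 1 : ℝ) / 2 + 1)
  have hrec := succ_mul_realCentralBinom_succ hN
  have hsucc : ((N + 2 : ℕ) + 1 : ℝ) / 2 = (N + 1) / 2 + 1 := by push_cast; ring
  rw [centralBinomTail, centralBinomTail, hsucc, mul_pow, mul_div_right_comm, mul_assoc,
    sin_pow_mul_cos_pow_three, zero_pow (Nat.succ_ne_zero _)]
  have hratio : 2 ^ (N + 2) * (N + 2) / realCentralBinom ((N + 1) / 2 + 1) =
      2 ^ N * (N + 3) / realCentralBinom ((N + 1) / 2) := by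
    rw [div_eq_div_iff hB'.ne' hB.ne']
    linear_combination -2 * 2 ^ N * hrec
  push_cast
  linear_combination -(∫ y in 0..x, sin y ^ (N + 1) * cos y ^ 2) * hratio

theorem norm_integral_sin_pow_mul_cos_sq_le (n : ℕ) :
    ‖∫ y in 0..π / 6, sin y ^ n * cos y ^ 2‖ ≤ (1 / 2) ^ n := by
  have hπ : |π / 6 - 0| ≤ 1 := by
    rw [sub_zero, abs_of_pos (by positivity)]
    linarith [pi_lt_four]
  refine (intervalIntegral.norm_integral_le_of_norm_le_const fun y hy ↦ ?_).trans
    (mul_le_of_le_one_right (by positivity) hπ)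
  obtain ⟨hy₀, hy₁⟩ := (Set.uIoc_of_le (by positivity : 0 ≤ π / 6)) ▸ hy
  have hsin_nonneg : 0 ≤ sin y := sin_nonneg_of_nonneg_of_le_pi hy₀.le (by linarith [pi_pos])
  have hsin_le : sin y ≤ 1 / 2 := by
    rw [← sin_pi_div_six]
    exact sin_le_sin_of_le_of_le_pi_div_two (by linarith) (by linarith [pi_pos]) hy₁
  rw [norm_mul, norm_pow, norm_of_nonneg hsin_nonneg, norm_of_nonneg (sq_nonneg _)]
  exact (mul_le_of_le_one_right (by positivity) (cos_sq_le_one y)).trans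
    (pow_le_pow_left₀ hsin_nonneg hsin_le n)

theorem norm_centralBinomTail_pi_div_six_le (N : ℕ) :
    ‖centralBinomTail N (π / 6)‖ ≤ 2 * (N + 1) / realCentralBinom ((N + 1) / 2) := by
  have hB := realCentralBinom_pos (by linarith [N.cast_nonneg (α := ℝ)] : -1 / 2 < (N + 1 : ℝ) / 2)
  rw [centralBinomTail, norm_mul, norm_of_nonneg (by positivity), div_mul_eq_mul_div]
  refine div_le_div_of_nonneg_right ?_ hB.le
  cases N with
  | zero => simp
  | succ N =>
    rw [zero_pow N.succ_ne_zero, zero_add, norm_mul, norm_natCast, add_tsub_cancel_right]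
    calc
      2 ^ (N + 1) * (((N + 1 : ℕ) : ℝ) * ‖∫ y in 0..π / 6, sin y ^ N * cos y ^ 2‖)
      _ ≤ 2 ^ (N + 1) * (((N + 1 : ℕ) : ℝ) * (1 / 2) ^ N) := by
        gcongr
        exact norm_integral_sin_pow_mul_cos_sq_le N
      _ = 2 * (N + 1 : ℕ) := by
        rw [mul_left_comm, pow_succ', mul_assoc, ← mul_pow, mul_one_div_cancel two_ne_zero, one_pow]
        ring
      _ ≤ 2 * ((N + 1 : ℕ) + 1) := by linarith

theorem tendsto_centralBinomTail_pi_div_six (e : ℕ) :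
    Tendsto (fun m ↦ centralBinomTail (2 * m + e) (π / 6)) atTop (𝓝 0) := by
  have h := (summable_pow_div_realCentralBinom ((e + 1) / 2) 1).tendsto_atTop_zero.const_mul 4
  rw [mul_zero] at h
  refine squeeze_zero_norm (fun m ↦ (norm_centralBinomTail_pi_div_six_le _).trans_eq ?_) h
  have hm : (((2 * m + e : ℕ) : ℝ) + 1) / 2 = m + (e + 1) / 2 := by push_cast; ring
  rw [hm, ← mul_div_assoc]
  push_cast
  ring

theorem centralBinomFunctional_one_mul_cos_pow_three (e : ℕ) :
    centralBinomFunctional ((e + 1) / 2) 1 * cos (π / 6) ^ 3 = centralBinomTail e (π / 6) := by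
  have hterm (m : ℕ) : (1 : ℝ[X]).eval (m + (e + 1) / 2 : ℝ) /
      realCentralBinom (m + (e + 1) / 2) * cos (π / 6) ^ 3 =
        centralBinomTail (2 * m + e) (π / 6) - centralBinomTail (2 * (m + 1) + e) (π / 6) := by
    have hm : (((2 * m + e : ℕ) : ℝ) + 1) / 2 = m + (e + 1) / 2 := by push_cast; ring
    rw [mul_add_one, add_right_comm, centralBinomTail_sub_centralBinomTail_add_two, hm,
      sin_pi_div_six, mul_one_div_cancel two_ne_zero, one_pow, eval_one]
  have hsum := ((summable_eval_div_realCentralBinom ((e + 1) / 2) 1).mul_right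
    (cos (π / 6) ^ 3)).hasSum.tendsto_sum_nat
  simp only [hterm, Finset.sum_range_sub' fun m ↦ centralBinomTail (2 * m + e) (π / 6),
    mul_zero, zero_add] at hsum
  have hlim := (tendsto_centralBinomTail_pi_div_six e).const_sub (centralBinomTail e (π / 6))
  rw [centralBinomFunctional_apply, ← tsum_mul_right, tsum_congr hterm]
  simpa using tendsto_nhds_unique hsum hlim

theorem realCentralBinom_one : realCentralBinom 1 = 2 := by
  simpa using realCentralBinom_natCast 1

theorem three_mul_centralBinomFunctional_one_sub :
    3 * centralBinomFunctional 1 1 - centralBinomFunctional (1 / 2) 1 = 1 := by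
  have htail_zero : centralBinomTail 0 (π / 6) = π / 4 := by
    rw [centralBinomTail, Nat.cast_zero, zero_add, realCentralBinom_one_half]
    simp
  have htail_one : centralBinomTail 1 (π / 6) = (cos (π / 6) / 2 + π / 6) / 2 := by
    rw [centralBinomTail, Nat.cast_one, one_add_one_eq_two, div_self two_ne_zero,
      realCentralBinom_one]
    simp [integral_cos_sq]
    ring
  have hhalf := centralBinomFunctional_one_mul_cos_pow_three 0
  have hone := centralBinomFunctional_one_mul_cos_pow_three 1
  rw [htail_zero, Nat.cast_zero, zero_add] at hhalf
  rw [htail_one, Nat.cast_one, one_add_one_eq_two, div_self two_ne_zero] at hone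
  have hcos : cos (π / 6) ^ 3 = 3 / 4 * cos (π / 6) := by rw [pow_succ, sq_cos_pi_div_six]
  have hcos_ne : cos (π / 6) ^ 3 ≠ 0 := by simp
  refine mul_right_cancel₀ hcos_ne ?_
  linear_combination 3 * hone - hhalf - hcos

theorem three_smul_centralBinomFunctional_sub_centralBinomDiff (p : ℝ[X]) :
    ((3 : ℝ) • centralBinomFunctional 1 - centralBinomFunctional (1 / 2)) (centralBinomDiff p) =
      3 * p.eval 1 := by
  rw [LinearMap.sub_apply, LinearMap.smul_apply, smul_eq_mul,
    centralBinomFunctional_centralBinomDiff (by norm_num),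
    centralBinomFunctional_centralBinomDiff (by norm_num), realCentralBinom_one]
  ring

end RealCentralBinom

theorem shifted_log_sine_pi_div_three (n : ℕ) :
    (∑' m : ℕ, ((m : ℝ) + 1) ^ n / (Nat.choose (2 * (m + 1)) (m + 1) : ℝ)) -
        1 / 3 * ∑' m : ℕ, ((m : ℝ) + 1 / 2) ^ n / halfBinom m =
      1 / 3 * ∑ k ∈ Finset.range (n + 1), polyBernoulli (n - k) k := by
  have hM_one : ((3 : ℝ) • centralBinomFunctional 1 - centralBinomFunctional (1 / 2)) 1 = 1 :=
    three_mul_centralBinomFunctional_one_sub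
  have hint : centralBinomFunctional 1 (Polynomial.X ^ n) =
      ∑' m : ℕ, ((m : ℝ) + 1) ^ n / (Nat.choose (2 * (m + 1)) (m + 1) : ℝ) := by
    refine (centralBinomFunctional_apply _ _).trans (tsum_congr fun m ↦ ?_)
    rw [Polynomial.eval_pow, Polynomial.eval_X, ← realCentralBinom_natCast, Nat.cast_add_one]
  have hhalf : centralBinomFunctional (1 / 2) (Polynomial.X ^ n) =
      ∑' m : ℕ, ((m : ℝ) + 1 / 2) ^ n / halfBinom m := by
    refine (centralBinomFunctional_apply _ _).trans (tsum_congr fun m ↦ ?_)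
    rw [Polynomial.eval_pow, Polynomial.eval_X, halfBinom_eq_realCentralBinom]
  have hM := map_X_pow_eq_sum_coeff_sq hM_one
    three_smul_centralBinomFunctional_sub_centralBinomDiff n
  rw [LinearMap.sub_apply, LinearMap.smul_apply, smul_eq_mul, hint, hhalf,
    ← sum_polyBernoulli_eq_sum_coeff_sq] at hM
  linear_combination 1 / 3 * hM
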